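/- Let R be a commutative noetherian ring and (C, W) a hereditary cotorsion pair cogenerated by a class P of pure-injective R-modules of finite injective dimension. Then C is closed under injective envelopes: if M ∈ C then the injective envelope E(M) belongs to C. -/

import Mathlib

open CategoryTheory Opposite

noncomputable section

/-- Vanishing of the `n`-th Ext group of two `R`-modules. -/
def extV (R : Type) [Ring R] (M N : ModuleCat.{0} R) (n : ℕ) : Prop :=
  Subsingleton (((_root_.Ext ℤ (ModuleCat.{0} R) n).obj (op M)).obj N)

/-- The left `Ext^1`-orthogonal class. -/
def leftPerp1 (R : Type) [Ring R] (𝒳 : Set (ModuleCat.{0} R)) : Set (ModuleCat.{0} R) :=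
  {M | ∀ X ∈ 𝒳, extV R M X 1}

/-- The right `Ext^1`-orthogonal class. -/
def rightPerp1 (R : Type) [Ring R] (𝒳 : Set (ModuleCat.{0} R)) : Set (ModuleCat.{0} R) :=
  {N | ∀ X ∈ 𝒳, extV R X N 1}

/-- `(𝒞, 𝒲)` is a cotorsion pair. -/
def IsCotorsionPair (R : Type) [Ring R] (𝒞 𝒲 : Set (ModuleCat.{0} R)) : Prop :=
  𝒞 = leftPerp1 R 𝒲 ∧ 𝒲 = rightPerp1 R 𝒞

/-- `(𝒞, 𝒲)` is a hereditary cotorsion pair. -/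
def IsHereditaryCotorsionPair (R : Type) [Ring R] (𝒞 𝒲 : Set (ModuleCat.{0} R)) : Prop :=
  IsCotorsionPair R 𝒞 𝒲 ∧ ∀ X ∈ 𝒞, ∀ Y ∈ 𝒲, ∀ i : ℕ, 1 ≤ i → extV R X Y i

/-- The class `𝒞_(i) = {M ∣ Ext^j(M, W) = 0 for all j > i and all W ∈ 𝒲}`. -/
def cotShift (R : Type) [Ring R] (𝒲 : Set (ModuleCat.{0} R)) (i : ℕ) : Set (ModuleCat.{0} R) :=
  {M | ∀ Y ∈ 𝒲, ∀ j : ℕ, i < j → extV R M Y j}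

/-- `f : A →ₗ[R] B` is a pure monomorphism. -/
def IsPureMono (R : Type) [CommRing R] {A B : Type} [AddCommGroup A] [Module R A]
    [AddCommGroup B] [Module R B] (f : A →ₗ[R] B) : Prop :=
  Function.Injective f ∧
    ∀ (Q : Type) [AddCommGroup Q] [Module R Q], Function.Injective (LinearMap.lTensor Q f)

/-- An `R`-module `N` is pure-injective if it is injective with respect to
pure monomorphisms. -/
def PureInjective (R : Type) [CommRing R] (N : Type) [AddCommGroup N] [Module R N] : Prop :=
  ∀ (A B : Type) [AddCommGroup A] [Module R A] [AddCommGroup B] [Module R B]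
    (f : A →ₗ[R] B), IsPureMono R f → ∀ g : A →ₗ[R] N, ∃ h : B →ₗ[R] N, h.comp f = g

/-- `N` has injective dimension at most `n`: all Ext-groups above degree `n` vanish. -/
def injDimLE (R : Type) [Ring R] (N : ModuleCat.{0} R) (n : ℕ) : Prop :=
  ∀ M : ModuleCat.{0} R, ∀ j : ℕ, n < j → extV R M N j

/-- The class of pure-injective `R`-modules of finite injective dimension. -/
def PIFinInj (R : Type) [CommRing R] : Set (ModuleCat.{0} R) :=
  {N | PureInjective R ↥N ∧ ∃ n : ℕ, injDimLE R N n}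

/-- The depth of a module over a commutative noetherian local ring, as the infimum of
the degrees in which `Ext(k, M)` does not vanish (`⊤` if all vanish). -/
def rdepth (A : Type) [CommRing A] [IsLocalRing A] (M : Type) [AddCommGroup M]
    [Module A M] : ℕ∞ :=
  sInf {n : ℕ∞ | ∃ i : ℕ, n = (i : ℕ∞) ∧
    ¬ extV A (ModuleCat.of A (IsLocalRing.ResidueField A)) (ModuleCat.of A M) i}

/-- The residue field `k(p)` of `R_p`, as an `R`-module. -/
abbrev resField (R : Type) [CommRing R] (p : PrimeSpectrum R) : Type :=
  LocalizedModule p.asIdeal.primeCompl (R ⧸ p.asIdeal)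

/-- `depth(R_p)`. -/
def ringDepthAt (R : Type) [CommRing R] (p : PrimeSpectrum R) : ℕ∞ :=
  rdepth (Localization.AtPrime p.asIdeal) (Localization.AtPrime p.asIdeal)

/-- `depth_{R_p}(M_p)`. -/
def depthAt (R : Type) [CommRing R] (p : PrimeSpectrum R) (M : Type) [AddCommGroup M]
    [Module R M] : ℕ∞ :=
  rdepth (Localization.AtPrime p.asIdeal) (LocalizedModule p.asIdeal.primeCompl M)

/-- `f : M →ₗ[R] E` exhibits `E` as an injective envelope of `M`: `E` is injective and
`f` is an essential monomorphism. -/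
def IsInjectiveEnvelope (R : Type) [Ring R] {M E : Type} [AddCommGroup M] [Module R M]
    [AddCommGroup E] [Module R E] (f : M →ₗ[R] E) : Prop :=
  Module.Injective R E ∧ Function.Injective f ∧
    ∀ K : Submodule R E, K ≠ ⊥ → K ⊓ LinearMap.range f ≠ ⊥

/-!
Fix `P` in the cogenerating class. By induction along a continuous filtration of `E(M)`
(Eklof's lemma), it is enough to prove `Ext¹(V, P) = 0` for each successive quotient `V`. If `A` is
a submodule of `E(M)` that contains every element whose annihilator contains the annihilator of an
element of `A`, and `p` is a maximal associated prime of `E(M) / A`, then the `p`-torsion of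
`E(M) / A` is a vector space over `κ(p)`, its preimage in `E(M)` has the same closure property, and
`p` is associated to `E(M)`, hence to `M`. So `E(M)` is filtered by `κ(p)`-vector spaces with
`p ∈ Ass M`.

For such `p`, pure-injectivity gives `L = M_p ∈ 𝒞`, since tensoring a free presentation
of the flat module `R_p` with `M` yields a pure exact sequence; as the pair is hereditary,
`Ext^i(L, P) = 0` for all `i ≥ 1`. Finally `Ext^i(V, P) = 0` for every `κ(p)`-vector space `V`, by
downward induction on `i` starting from the injective dimension of `P`. As `Hom(R/p, L) ≠ 0`, every
`V` is a direct summand of a sum of copies of it. For an iterated syzygy `N` of `R/p` and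
`0 → N' → F → N → 0` with `F` free of finite rank, the sequence
`0 → Hom(N, L) → Hom(F, L) → Hom(N', L)` has cokernel `Ext¹(N, L)`, again a `κ(p)`-vector space, so
the vanishing for `Hom(N, L)` in degree `i` follows from that for `Hom(N', L)` in degree `i + 1` and
for vector spaces in degree `i + 2`.
-/

universe u

section ExtVanishing

open CategoryTheory.Abelian (Ext)

theorem extV_succ_iff (R : Type) [Ring R] (X Y : ModuleCat.{0} R) (n : ℕ) :
    extV R X Y (n + 1) ↔ Subsingleton (Abelian.Ext X Y (n + 1)) := by
  let Q : ProjectiveResolution X := ProjectiveResolution.of X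
  have extV_iff_coboundary : extV R X Y (n + 1) ↔
      ∀ f : Q.complex.X (n + 1) ⟶ Y, Q.complex.d (n + 2) (n + 1) ≫ f = 0 →
        ∃ g : Q.complex.X n ⟶ Y, Q.complex.d (n + 1) n ≫ g = f := by
    unfold extV
    rw [← ModuleCat.isZero_iff_subsingleton, (Q.isoExt (R := ℤ) (n + 1) Y).isZero_iff,
      ← HomologicalComplex.exactAt_iff_isZero_homology,
      HomologicalComplex.exactAt_iff' _ n (n + 1) (n + 2) (by simp) (by simp),
      ShortComplex.moduleCat_exact_iff]
    rfl
  rw [extV_iff_coboundary, subsingleton_iff_forall_eq 0]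
  constructor
  · intro h a
    obtain ⟨f, hf, rfl⟩ := Q.extMk_surjective a (n + 2) rfl
    exact (Q.extMk_eq_zero_iff f _ rfl hf n rfl).2 (h f hf)
  · intro h f hf
    exact (Q.extMk_eq_zero_iff f _ rfl hf n rfl).1 (h _)

/-- `Ext^n_R(X, P) = 0`, for unbundled modules. -/
def ExtVanishes (R : Type u) [Ring R] (X P : Type u) [AddCommGroup X] [Module R X]
    [AddCommGroup P] [Module R P] (n : ℕ) : Prop :=
  Subsingleton (Abelian.Ext (ModuleCat.of R X) (ModuleCat.of R P) n)

variable {R : Type u} [Ring R] {A B C D P : Type u} [AddCommGroup A] [Module R A]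
  [AddCommGroup B] [Module R B] [AddCommGroup C] [Module R C] [AddCommGroup D] [Module R D]
  [AddCommGroup P] [Module R P]

theorem extVanishes_iff_forall_eq_zero {n : ℕ} :
    ExtVanishes R A P n ↔ ∀ a : Abelian.Ext (ModuleCat.of R A) (ModuleCat.of R P) n, a = 0 :=
  subsingleton_iff_forall_eq 0

theorem shortExact_of_exact {f : A →ₗ[R] B} {g : B →ₗ[R] C} (hf : Function.Injective f)
    (hg : Function.Surjective g) (hfg : Function.Exact f g) :
    (ShortComplex.mk (ModuleCat.ofHom f) (ModuleCat.ofHom g)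
      (ModuleCat.hom_ext hfg.linearMap_comp_eq_zero)).ShortExact where
  exact := (ShortComplex.ShortExact.moduleCat_exact_iff_function_exact _).2 hfg
  mono_f := (ModuleCat.mono_iff_injective _).2 hf
  epi_g := (ModuleCat.epi_iff_surjective _).2 hg

theorem ExtVanishes.left_of_exact {f : A →ₗ[R] B} {g : B →ₗ[R] C} (hf : Function.Injective f)
    (hg : Function.Surjective g) (hfg : Function.Exact f g) {n : ℕ}
    (hB : ExtVanishes R B P n) (hC : ExtVanishes R C P (n + 1)) : ExtVanishes R A P n := by
  rw [extVanishes_iff_forall_eq_zero] at hB hC ⊢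
  intro a
  obtain ⟨b, rfl⟩ := Ext.contravariant_sequence_exact₁ (shortExact_of_exact hf hg hfg) _ a
    (add_comm 1 n) (hC _)
  rw [hB b, Ext.comp_zero]

theorem ExtVanishes.ker_of_exact {f : A →ₗ[R] B} {g : B →ₗ[R] D} (hf : Function.Injective f)
    (hfg : Function.Exact f g) {n : ℕ} (hB : ExtVanishes R B P n)
    (hD : ExtVanishes R D P (n + 1)) (hcoker : ExtVanishes R (D ⧸ LinearMap.range g) P (n + 2)) :
    ExtVanishes R A P n := by
  have hrange : ExtVanishes R (LinearMap.range g) P (n + 1) :=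
    hD.left_of_exact (Submodule.subtype_injective _) (Submodule.mkQ_surjective _)
      (LinearMap.exact_subtype_mkQ _) hcoker
  refine hB.left_of_exact hf g.surjective_rangeRestrict (fun b => ?_) hrange
  rw [← hfg b, ← Subtype.coe_inj]
  rfl

theorem ExtVanishes.one_right_of_exact {f : A →ₗ[R] B} {g : B →ₗ[R] C}
    (hf : Function.Injective f) (hg : Function.Surjective g) (hfg : Function.Exact f g)
    (hB : ExtVanishes R B P 1) (hext : ∀ u : A →ₗ[R] P, ∃ v : B →ₗ[R] P, v ∘ₗ f = u) :
    ExtVanishes R C P 1 := by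
  rw [extVanishes_iff_forall_eq_zero] at hB ⊢
  have hS := shortExact_of_exact hf hg hfg
  intro c
  obtain ⟨a, rfl⟩ := Ext.contravariant_sequence_exact₃ hS _ c (hB _) (add_zero 1)
  obtain ⟨u, rfl⟩ := Ext.homEquiv₀.symm.surjective a
  obtain ⟨v, hv⟩ := hext u.hom
  obtain rfl : u = ModuleCat.ofHom f ≫ ModuleCat.ofHom v := ModuleCat.hom_ext hv.symm
  rw [Ext.homEquiv₀_symm_apply, ← Ext.mk₀_comp_mk₀]
  exact hS.extClass_comp_assoc _

theorem exists_extVanishes_iff_exists_lift (R : Type u) [Ring R] (P : Type u) [AddCommGroup P]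
    [Module R P] (n : ℕ) :
    ∃ (J L : ModuleCat.{u} R) (π : J →ₗ[R] L), Module.Injective R J ∧
      ∀ (X : Type u) [AddCommGroup X] [Module R X],
        ExtVanishes R X P (n + 1) ↔ ∀ g : X →ₗ[R] L, ∃ h : X →ₗ[R] J, π ∘ₗ h = g := by
  let I : InjectiveResolution (ModuleCat.of R P) := InjectiveResolution.of _
  let d := I.cocomplex.d n (n + 1)
  let d' := I.cocomplex.d (n + 1) (n + 2)
  have d_comp_d' : d ≫ d' = 0 := I.cocomplex.d_comp_d _ _ _
  have hJ : Injective (ModuleCat.of R (I.cocomplex.X n)) := I.injective n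
  let π : I.cocomplex.X n →ₗ[R] LinearMap.ker d'.hom :=
    d.hom.codRestrict _ fun x => LinearMap.congr_fun (congrArg ModuleCat.Hom.hom d_comp_d') x
  refine ⟨_, ModuleCat.of R (LinearMap.ker d'.hom), π,
    Module.injective_module_of_injective_object R _, fun X _ _ => ?_⟩
  rw [extVanishes_iff_forall_eq_zero]
  constructor
  · intro hX g
    let f : ModuleCat.of R X ⟶ I.cocomplex.X (n + 1) :=
      ModuleCat.ofHom ((LinearMap.ker d'.hom).subtype ∘ₗ g)
    have hf : f ≫ d' = 0 := ModuleCat.hom_ext (LinearMap.ext fun x => (g x).2)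
    obtain ⟨h, hh⟩ := (I.extMk_eq_zero_iff f (n + 2) rfl hf n rfl).1 (hX _)
    exact ⟨h.hom, LinearMap.ext fun x =>
      Subtype.ext (LinearMap.congr_fun (congrArg ModuleCat.Hom.hom hh) x)⟩
  · intro hX a
    obtain ⟨f, hf, rfl⟩ := I.extMk_surjective a (n + 2) rfl
    obtain ⟨h, hh⟩ := hX (f.hom.codRestrict _ fun x =>
      LinearMap.congr_fun (congrArg ModuleCat.Hom.hom hf) x)
    exact (I.extMk_eq_zero_iff f (n + 2) rfl hf n rfl).2 ⟨ModuleCat.ofHom h,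
      ModuleCat.hom_ext (LinearMap.ext fun x =>
        congrArg Subtype.val (LinearMap.congr_fun hh x))⟩

theorem ExtVanishes.of_leftInverse {n : ℕ} (hB : ExtVanishes R B P (n + 1)) (i : A →ₗ[R] B)
    (r : B →ₗ[R] A) (hri : Function.LeftInverse r i) : ExtVanishes R A P (n + 1) := by
  obtain ⟨J, L, π, -, lift_iff⟩ := exists_extVanishes_iff_exists_lift R P n
  rw [lift_iff] at hB ⊢
  intro g
  obtain ⟨h, hh⟩ := hB (g ∘ₗ r)
  refine ⟨h ∘ₗ i, ?_⟩
  rw [← LinearMap.comp_assoc, hh, LinearMap.comp_assoc]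
  exact LinearMap.ext fun a => congrArg g (hri a)

theorem ExtVanishes.of_linearEquiv {n : ℕ} (hB : ExtVanishes R B P (n + 1)) (e : A ≃ₗ[R] B) :
    ExtVanishes R A P (n + 1) :=
  hB.of_leftInverse e e.symm e.symm_apply_apply

theorem ExtVanishes.finsupp {n : ℕ} (hA : ExtVanishes R A P (n + 1)) (ι : Type u) :
    ExtVanishes R (ι →₀ A) P (n + 1) := by
  obtain ⟨J, L, π, -, lift_iff⟩ := exists_extVanishes_iff_exists_lift R P n
  rw [lift_iff] at hA ⊢
  intro g
  choose h hh using fun i => hA (g ∘ₗ Finsupp.lsingle i)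
  refine ⟨Finsupp.lsum ℕ h, Finsupp.lhom_ext' fun i => ?_⟩
  rw [LinearMap.comp_assoc, Finsupp.lsum_comp_lsingle, hh]

end ExtVanishing

section TransfiniteExtension

variable {R : Type u} [Ring R] {E J L P : Type u} [AddCommGroup E] [Module R E]
  [AddCommGroup J] [Module R J] [AddCommGroup L] [Module R L] [AddCommGroup P] [Module R P]

theorem exists_extend_partial_lift (hJ : Module.Injective R J) (π : J →ₗ[R] L) (g : E →ₗ[R] L)
    (A : Submodule R E) (T : Submodule R (E ⧸ A))
    (hT : ∀ t : T →ₗ[R] L, ∃ h : T →ₗ[R] J, π ∘ₗ h = t) (l : E →ₗ[R] J)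
    (hl : ∀ x ∈ A, π (l x) = g x) :
    ∃ l' : E →ₗ[R] J, (∀ x ∈ A, l' x = l x) ∧ ∀ x ∈ T.comap A.mkQ, π (l' x) = g x := by
  have error_le_ker : A ≤ LinearMap.ker (g - π ∘ₗ l) := fun x hx =>
    sub_eq_zero.2 (hl x hx).symm
  obtain ⟨h, hh⟩ := hT (A.liftQ (g - π ∘ₗ l) error_le_ker ∘ₗ T.subtype)
  obtain ⟨h', hh'⟩ := hJ.out T.subtype T.subtype_injective h
  refine ⟨l + h' ∘ₗ A.mkQ, fun x hx => ?_, fun x hx => ?_⟩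
  · simp [(Submodule.Quotient.mk_eq_zero A).2 hx]
  · have correction : π (h' (A.mkQ x)) = g x - π (l x) :=
      (congrArg π (hh' ⟨A.mkQ x, hx⟩)).trans (LinearMap.congr_fun hh ⟨A.mkQ x, hx⟩)
    rw [LinearMap.add_apply, map_add, LinearMap.comp_apply, correction, add_sub_cancel]

theorem exists_lift_of_transfinite_extension (hJ : Module.Injective R J) (π : J →ₗ[R] L)
    (G : Submodule R E → Prop) (bot : G ⊥)
    (sSup_chain : ∀ c : Set (Submodule R E), c.Nonempty → IsChain (· ≤ ·) c →
      (∀ A ∈ c, G A) → G (sSup c))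
    (step : ∀ A, G A → A ≠ ⊤ → ∃ T : Submodule R (E ⧸ A), T ≠ ⊥ ∧ G (T.comap A.mkQ) ∧
      ∀ t : T →ₗ[R] L, ∃ h : T →ₗ[R] J, π ∘ₗ h = t) (g : E →ₗ[R] L) :
    ∃ h : E →ₗ[R] J, π ∘ₗ h = g := by
  let partialLifts : Set (E →ₗ.[R] J) := {f | G f.domain ∧ ∀ x : f.domain, π (f x) = g x}
  have bot_mem : ⊥ ∈ partialLifts := by
    refine ⟨bot, fun x => ?_⟩
    obtain rfl : x = 0 := Subtype.ext ((Submodule.mem_bot R).1 x.2)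
    simp
  obtain ⟨f, -, hf⟩ := zorn_le_nonempty₀ partialLifts (fun c hcS hc f₀ hf₀ => by
    refine ⟨LinearPMap.sSup c hc.directedOn, ⟨?_, fun x => ?_⟩,
      fun f => LinearPMap.le_sSup hc.directedOn⟩
    · exact sSup_chain _ ⟨_, f₀, hf₀, rfl⟩
        (hc.image_of_map_rel _ (· ≤ ·) LinearPMap.domain fun _ _ h => h.1)
        (Set.forall_mem_image.2 fun f hf => (hcS hf).1)
    · obtain ⟨f, hfc, hxf⟩ :=
        (LinearPMap.mem_domain_sSup_iff ⟨f₀, hf₀⟩ hc.directedOn).1 x.2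
      exact (congrArg π (LinearPMap.sSup_apply hc.directedOn hfc ⟨x, hxf⟩)).trans
        ((hcS hfc).2 ⟨x, hxf⟩)) ⊥ bot_mem
  obtain ⟨f_good, f_lift⟩ := hf.prop
  obtain ⟨l, hl⟩ := hJ.out f.domain.subtype f.domain.subtype_injective f.toFun
  have domain_eq_top : f.domain = ⊤ := by
    by_contra domain_ne_top
    obtain ⟨T, T_ne_bot, T_good, T_lift⟩ := step _ f_good domain_ne_top
    obtain ⟨l', hl'l, hl'⟩ := exists_extend_partial_lift hJ π g f.domain T T_lift l
      fun x hx => (congrArg π (hl ⟨x, hx⟩)).trans (f_lift ⟨x, hx⟩)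
    let extension : E →ₗ.[R] J := ⟨T.comap f.domain.mkQ, l' ∘ₗ Submodule.subtype _⟩
    have le_extension : f ≤ extension :=
      ⟨Submodule.le_comap_mkQ _ _, fun x y (hxy : (x : E) = y) =>
        (hl x).symm.trans ((hl'l x x.2).symm.trans (congrArg l' hxy))⟩
    have extension_le : extension ≤ f :=
      hf.le_of_ge ⟨T_good, fun x => hl' x x.2⟩ le_extension
    refine T_ne_bot ((Submodule.eq_bot_iff T).2 fun t ht => ?_)
    obtain ⟨x, rfl⟩ := f.domain.mkQ_surjective t
    exact (Submodule.Quotient.mk_eq_zero _).2 (extension_le.1 ht)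
  refine ⟨l, LinearMap.ext fun x => ?_⟩
  have hx : x ∈ f.domain := domain_eq_top ▸ Submodule.mem_top
  exact (congrArg π (hl ⟨x, hx⟩)).trans (f_lift ⟨x, hx⟩)

theorem ExtVanishes.one_of_transfinite_extension (G : Submodule R E → Prop) (bot : G ⊥)
    (sSup_chain : ∀ c : Set (Submodule R E), c.Nonempty → IsChain (· ≤ ·) c →
      (∀ A ∈ c, G A) → G (sSup c))
    (step : ∀ A, G A → A ≠ ⊤ → ∃ T : Submodule R (E ⧸ A), T ≠ ⊥ ∧ G (T.comap A.mkQ) ∧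
      ExtVanishes R T P 1) :
    ExtVanishes R E P 1 := by
  obtain ⟨J, L, π, hJ, lift_iff⟩ := exists_extVanishes_iff_exists_lift R P 0
  rw [lift_iff]
  simp only [lift_iff] at step
  exact exists_lift_of_transfinite_extension hJ π G bot sSup_chain step

end TransfiniteExtension

section FlatBaseChange

open TensorProduct

theorem IsPureMono.lTensor {R : Type} [CommRing R] {A B : Type} [AddCommGroup A] [Module R A]
    [AddCommGroup B] [Module R B] {f : A →ₗ[R] B} (hf : IsPureMono R f) (M : Type)
    [AddCommGroup M] [Module R M] : IsPureMono R (f.lTensor M) := by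
  refine ⟨hf.2 M, fun Q _ _ => ?_⟩
  have lTensor_lTensor : ((f.lTensor M).lTensor Q) ∘ₗ (TensorProduct.assoc R Q M A).toLinearMap =
      (TensorProduct.assoc R Q M B).toLinearMap ∘ₗ f.lTensor (Q ⊗[R] M) :=
    TensorProduct.ext_threefold fun _ _ _ => rfl
  have injective_comp : Function.Injective
      (((f.lTensor M).lTensor Q) ∘ₗ (TensorProduct.assoc R Q M A).toLinearMap) := by
    rw [lTensor_lTensor]
    exact (TensorProduct.assoc R Q M B).injective.comp (hf.2 (Q ⊗[R] M))
  exact (Function.Injective.of_comp_iff' _ (TensorProduct.assoc R Q M A).bijective).1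
    injective_comp

theorem isPureMono_of_exact_of_flat {R : Type} [CommRing R] {A B F : Type} [AddCommGroup A]
    [Module R A] [AddCommGroup B] [Module R B] [AddCommGroup F] [Module R F] [Module.Flat R F]
    {f : A →ₗ[R] B} {g : B →ₗ[R] F} (hf : Function.Injective f) (hg : Function.Surjective g)
    (hfg : Function.Exact f g) : IsPureMono R f :=
  ⟨hf, fun Q _ _ => LinearMap.lTensor_injective_of_exact_of_flat g hg f hf hfg Q⟩

theorem ExtVanishes.tensor_flat {R : Type} [CommRing R] {M P : Type} [AddCommGroup M]
    [Module R M] [AddCommGroup P] [Module R P] (hP : PureInjective R P)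
    (hM : ExtVanishes R M P 1) (F : Type) [AddCommGroup F] [Module R F] [Module.Flat R F] :
    ExtVanishes R (M ⊗[R] F) P 1 := by
  classical
  obtain ⟨K, k, φ, hk, hφ, hkφ⟩ : ∃ (K : ModuleCat.{0} R) (k : K →ₗ[R] (F →₀ R))
      (φ : (F →₀ R) →ₗ[R] F),
      Function.Injective k ∧ Function.Surjective φ ∧ Function.Exact k φ :=
    ⟨ModuleCat.of R (LinearMap.ker (Finsupp.linearCombination R (id : F → F))),
      Submodule.subtype _, _, Submodule.subtype_injective _,
      Finsupp.linearCombination_id_surjective R F, LinearMap.exact_subtype_ker_map _⟩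
  have pure_lTensor : IsPureMono R (k.lTensor M) :=
    (isPureMono_of_exact_of_flat hk hφ hkφ).lTensor M
  have tensor_free : ExtVanishes R (M ⊗[R] (F →₀ R)) P 1 :=
    (hM.finsupp F).of_linearEquiv (TensorProduct.finsuppScalarRight R R M F)
  exact tensor_free.one_right_of_exact pure_lTensor.1 (LinearMap.lTensor_surjective M hφ)
    (lTensor_exact M hkφ hφ) (hP _ _ _ pure_lTensor)

theorem ExtVanishes.localizedModule {R : Type} [CommRing R] {M P : Type} [AddCommGroup M]
    [Module R M] [AddCommGroup P] [Module R P] (hP : PureInjective R P)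
    (hM : ExtVanishes R M P 1) (S : Submonoid R) : ExtVanishes R (LocalizedModule S M) P 1 :=
  have : Module.Flat R (Localization S) := IsLocalization.flat _ S
  (hM.tensor_flat hP (Localization S)).of_linearEquiv
    ((LocalizedModule.equivTensorProduct S M).restrictScalars R ≪≫ₗ TensorProduct.comm R _ M)

end FlatBaseChange

section ResidueSpaces

variable {R : Type u} [CommRing R] {p : Ideal R} {V W Z N P : Type u} [AddCommGroup V] [Module R V]
  [AddCommGroup W] [Module R W] [AddCommGroup Z] [Module R Z] [AddCommGroup N] [Module R N]
  [AddCommGroup P] [Module R P]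

/-- `V` is `p`-local: every element outside `p` acts bijectively, so that for prime `p` the module
`V` is an `R_p`-module in a unique way. -/
def IsLocalAt (p : Ideal R) (V : Type u) [AddCommGroup V] [Module R V] : Prop :=
  ∀ s ∉ p, Function.Bijective fun v : V => s • v

theorem IsLocalAt.linearMap (hV : IsLocalAt p V) (N : Type u) [AddCommGroup N] [Module R N] :
    IsLocalAt p (N →ₗ[R] V) := by
  intro s hs
  let e : V ≃ₗ[R] V := LinearEquiv.ofBijective (LinearMap.lsmul R V s) (hV s hs)
  exact (e.congrRight (M := N)).bijective

theorem IsLocalAt.quotient_range (hV : IsLocalAt p V) (hW : IsLocalAt p W) (f : V →ₗ[R] W) :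
    IsLocalAt p (W ⧸ LinearMap.range f) := by
  intro s hs
  refine ⟨(injective_iff_map_eq_zero (DistribSMul.toAddMonoidHom _ s)).2 fun w hw => ?_,
    fun w => ?_⟩
  · obtain ⟨w, rfl⟩ := Submodule.Quotient.mk_surjective _ w
    obtain ⟨v, hv⟩ : s • w ∈ LinearMap.range f := (Submodule.Quotient.mk_eq_zero _).1 hw
    obtain ⟨v, rfl⟩ := (hV s hs).2 v
    exact (Submodule.Quotient.mk_eq_zero _).2 ⟨v, (hW s hs).1 ((map_smul f s v).symm.trans hv)⟩
  · obtain ⟨w, rfl⟩ := Submodule.Quotient.mk_surjective _ w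
    obtain ⟨w, rfl⟩ := (hW s hs).2 w
    exact ⟨Submodule.Quotient.mk w, rfl⟩

theorem IsLocalAt.isLocalizedModule_id [p.IsPrime] (hV : IsLocalAt p V) :
    IsLocalizedModule p.primeCompl (LinearMap.id : V →ₗ[R] V) where
  map_units s := (Module.End.isUnit_iff _).2 (hV s s.2)
  surj v := ⟨(v, 1), one_smul _ v⟩
  exists_of_eq h := ⟨1, congrArg _ h⟩

theorem isLocalAt_localizedModule (p : Ideal R) [p.IsPrime] (V : Type u) [AddCommGroup V]
    [Module R V] : IsLocalAt p (LocalizedModule p.primeCompl V) := fun s hs =>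
  (Module.End.isUnit_iff _).1 (IsLocalizedModule.map_units
    (LocalizedModule.mkLinearMap p.primeCompl V) (⟨s, hs⟩ : p.primeCompl))

/-- `V` is (for prime `p`) a vector space over the residue field `κ(p)`: it is `p`-local and killed
by `p`. Keeping this as a property of the `R`-module `V` avoids carrying a second module
structure. -/
structure IsResidueSpace (p : Ideal R) (V : Type u) [AddCommGroup V] [Module R V] : Prop where
  isLocalAt : IsLocalAt p V
  smul_eq_zero : ∀ a ∈ p, ∀ v : V, a • v = 0

theorem IsResidueSpace.exists_module_residueField [p.IsPrime] (hV : IsResidueSpace p V) :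
    ∃ _ : Module p.ResidueField V, IsScalarTower R p.ResidueField V := by
  have := hV.isLocalAt.isLocalizedModule_id
  let A := Localization.AtPrime p
  let : Module A V := IsLocalizedModule.module p.primeCompl (LinearMap.id : V →ₗ[R] V)
  have : IsScalarTower R A V :=
    IsLocalizedModule.isScalarTower_module p.primeCompl (LinearMap.id : V →ₗ[R] V)
  have killed : Module.IsTorsionBySet A V (IsLocalRing.maximalIdeal A : Set A) := by
    have map_le (v : V) :
        p.map (algebraMap R A) ≤ LinearMap.ker (LinearMap.toSpanSingleton A V v) :=
      Ideal.map_le_iff_le_comap.2 fun a ha =>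
        (algebraMap_smul A a v).trans (hV.smul_eq_zero a ha v)
    rintro v ⟨a, ha⟩
    rw [← Localization.AtPrime.map_eq_maximalIdeal] at ha
    exact map_le v ha
  exact ⟨killed.module, killed.isScalarTower⟩

theorem exists_leftInverse_finsupp (κ : Type u) [Field κ] [Algebra R κ] [Module κ V] [Module κ Z]
    [IsScalarTower R κ V] [IsScalarTower R κ Z] [Nontrivial Z] :
    ∃ (ι : Type u) (i : V →ₗ[R] (ι →₀ Z)) (r : (ι →₀ Z) →ₗ[R] V), Function.LeftInverse r i := by
  let b := Module.Basis.ofVectorSpace κ V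
  obtain ⟨z, hz⟩ := exists_ne (0 : Z)
  obtain ⟨q, hq⟩ := (LinearMap.toSpanSingleton κ Z z).exists_leftInverse_of_injective
    (LinearMap.ker_toSpanSingleton κ hz)
  let i := Finsupp.mapRange.linearMap (LinearMap.toSpanSingleton κ Z z) ∘ₗ b.repr.toLinearMap
  let r := b.repr.symm.toLinearMap ∘ₗ Finsupp.mapRange.linearMap q
  refine ⟨_, i.restrictScalars R, r.restrictScalars R, fun v => ?_⟩
  have q_apply (c : κ) : q (c • z) = c := LinearMap.congr_fun hq c
  exact b.repr.injective (Finsupp.ext fun k => by simp [i, r, q_apply])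

theorem ExtVanishes.of_isResidueSpace [p.IsPrime] [Nontrivial Z] (hZ : IsResidueSpace p Z)
    (hV : IsResidueSpace p V) {n : ℕ} (h : ExtVanishes R Z P (n + 1)) :
    ExtVanishes R V P (n + 1) := by
  obtain ⟨_, _⟩ := hZ.exists_module_residueField
  obtain ⟨_, _⟩ := hV.exists_module_residueField
  obtain ⟨ι, i, r, hri⟩ := exists_leftInverse_finsupp (R := R) (V := V) (Z := Z) p.ResidueField
  exact (h.finsupp ι).of_leftInverse i r hri

end ResidueSpaces

section DownwardInduction

variable {R : Type u} [CommRing R] {p : Ideal R} {F N L P : Type u} [AddCommGroup F] [Module R F]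
  [AddCommGroup N] [Module R N] [AddCommGroup L] [Module R L] [AddCommGroup P] [Module R P]

/-- `N` is finitely generated and multiplication by each element of `p` is stably zero on `N`, i.e.
factors through a finite free module. This holds for `R ⧸ p` and passes to syzygies. -/
structure IsStablyKilledBy (p : Ideal R) (N : Type u) [AddCommGroup N] [Module R N] : Prop where
  finite : Module.Finite R N
  exists_factor : ∀ a ∈ p, ∃ (r : ℕ) (f : N →ₗ[R] (Fin r → R)) (g : (Fin r → R) →ₗ[R] N),
    ∀ x, g (f x) = a • x

theorem isStablyKilledBy_quotient (p : Ideal R) : IsStablyKilledBy p (R ⧸ p) where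
  finite := inferInstance
  exists_factor _ ha := ⟨0, 0, 0, fun x =>
    (Module.mem_annihilator.1 (Ideal.annihilator_quotient.ge ha) x).symm⟩

theorem IsStablyKilledBy.exists_extend_smul_ker (hN : IsStablyKilledBy p N) {π : F →ₗ[R] N}
    (hπ : Function.Surjective π) {a : R} (ha : a ∈ p) :
    ∃ u : F →ₗ[R] LinearMap.ker π, ∀ x : LinearMap.ker π, u x = a • x := by
  obtain ⟨r, f, g, hgf⟩ := hN.exists_factor a ha
  obtain ⟨g', hg'⟩ := Module.projective_lifting_property π g hπ
  have π_g' (y) : π (g' y) = g y := LinearMap.congr_fun hg' y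
  let v : F →ₗ[R] F := a • LinearMap.id - g' ∘ₗ f ∘ₗ π
  have v_mem_ker (x) : v x ∈ LinearMap.ker π := by simp [v, π_g', hgf]
  exact ⟨v.codRestrict _ v_mem_ker, fun x => Subtype.ext (by simp [v, LinearMap.mem_ker.1 x.2])⟩

theorem IsStablyKilledBy.ker [IsNoetherianRing R] (hN : IsStablyKilledBy p N) {r : ℕ}
    {π : (Fin r → R) →ₗ[R] N} (hπ : Function.Surjective π) :
    IsStablyKilledBy p (LinearMap.ker π) where
  finite := inferInstance
  exists_factor _ ha :=
    have ⟨u, hu⟩ := hN.exists_extend_smul_ker hπ ha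
    ⟨r, (LinearMap.ker π).subtype, u, hu⟩

theorem isResidueSpace_hom_quotient (hL : IsLocalAt p L) :
    IsResidueSpace p ((R ⧸ p) →ₗ[R] L) where
  isLocalAt := hL.linearMap _
  smul_eq_zero a ha φ := LinearMap.ext fun x => by
    have smul_x : a • x = 0 := Module.mem_annihilator.1 (Ideal.annihilator_quotient.ge ha) x
    rw [LinearMap.smul_apply, ← map_smul, smul_x, map_zero, LinearMap.zero_apply]

theorem nontrivial_hom_quotient {z : L} (hz : z ≠ 0) (hpz : ∀ a ∈ p, a • z = 0) :
    Nontrivial ((R ⧸ p) →ₗ[R] L) := by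
  refine ⟨p.liftQ (LinearMap.toSpanSingleton R L z) hpz, 0, fun h => hz ?_⟩
  exact (one_smul R z).symm.trans (LinearMap.congr_fun h (p.mkQ 1))

theorem IsStablyKilledBy.isResidueSpace_coker_lcomp (hN : IsStablyKilledBy p N) {π : F →ₗ[R] N}
    (hπ : Function.Surjective π) (hL : IsLocalAt p L) :
    IsResidueSpace p ((LinearMap.ker π →ₗ[R] L) ⧸
      LinearMap.range (LinearMap.lcomp R L (LinearMap.ker π).subtype)) where
  isLocalAt := (hL.linearMap _).quotient_range (hL.linearMap _) _
  smul_eq_zero a ha φ := by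
    obtain ⟨φ, rfl⟩ := Submodule.Quotient.mk_surjective _ φ
    obtain ⟨u, hu⟩ := hN.exists_extend_smul_ker hπ ha
    exact (Submodule.Quotient.mk_eq_zero _).2
      ⟨φ ∘ₗ u, LinearMap.ext fun x => (congrArg φ (hu x)).trans (map_smul φ a x)⟩

theorem ExtVanishes.hom_free {n : ℕ} (hL : ExtVanishes R L P (n + 1)) (r : ℕ) :
    ExtVanishes R ((Fin r → R) →ₗ[R] L) P (n + 1) :=
  (hL.finsupp (ULift (Fin r))).of_linearEquiv
    (((Pi.basisFun R (Fin r)).constr R).symm ≪≫ₗ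
      LinearEquiv.funCongrLeft R L Equiv.ulift ≪≫ₗ
      (Finsupp.linearEquivFunOnFinite R L (ULift (Fin r))).symm)

theorem IsStablyKilledBy.extVanishes_hom [IsNoetherianRing R] {n : ℕ} (hL : IsLocalAt p L)
    (hLP : ExtVanishes R L P (n + 1))
    (hom_vanish : ∀ (K : Type u) [AddCommGroup K] [Module R K], IsStablyKilledBy p K →
      ExtVanishes R (K →ₗ[R] L) P (n + 2))
    (residue_vanish : ∀ (V : Type u) [AddCommGroup V] [Module R V], IsResidueSpace p V →
      ExtVanishes R V P (n + 3))
    (hN : IsStablyKilledBy p N) : ExtVanishes R (N →ₗ[R] L) P (n + 1) := by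
  have := hN.finite
  obtain ⟨r, π, hπ⟩ := Module.Finite.exists_fin' R N
  exact (hLP.hom_free r).ker_of_exact (LinearMap.lcomp_injective_of_surjective π hπ)
    (LinearMap.exact_lcomp_of_exact_of_surjective L (LinearMap.exact_subtype_ker_map π) hπ)
    (hom_vanish _ (hN.ker hπ)) (residue_vanish _ (hN.isResidueSpace_coker_lcomp hπ hL))

theorem IsResidueSpace.extVanishes_one [IsNoetherianRing R] [p.IsPrime] (hL : IsLocalAt p L)
    {z : L} (hz : z ≠ 0) (hpz : ∀ a ∈ p, a • z = 0) (hLP : ∀ n, ExtVanishes R L P (n + 1)) (d : ℕ)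
    (injDim_le : ∀ (X : Type u) [AddCommGroup X] [Module R X], ∀ n, d ≤ n →
      ExtVanishes R X P (n + 1)) {V : Type u} [AddCommGroup V] [Module R V]
    (hV : IsResidueSpace p V) : ExtVanishes R V P 1 := by
  have := nontrivial_hom_quotient hz hpz
  suffices key : ∀ k n : ℕ, d ≤ n + k →
      (∀ (N : Type u) [AddCommGroup N] [Module R N], IsStablyKilledBy p N →
        ExtVanishes R (N →ₗ[R] L) P (n + 1)) ∧
      ∀ (V : Type u) [AddCommGroup V] [Module R V], IsResidueSpace p V →
        ExtVanishes R V P (n + 1) from (key d 0 d.zero_add.ge).2 V hV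
  intro k
  induction k with
  | zero =>
    exact fun n hn => ⟨fun N _ _ _ => injDim_le _ n hn, fun V _ _ _ => injDim_le V n hn⟩
  | succ k ih =>
    intro n hn
    have hom_vanish (N : Type u) [AddCommGroup N] [Module R N] (hN : IsStablyKilledBy p N) :
        ExtVanishes R (N →ₗ[R] L) P (n + 1) :=
      hN.extVanishes_hom hL (hLP n) (ih (n + 1) (by omega)).1 (ih (n + 2) (by omega)).2
    exact ⟨hom_vanish, fun V _ _ hV =>
      (hom_vanish _ (isStablyKilledBy_quotient p)).of_isResidueSpace
        (isResidueSpace_hom_quotient hL) hV⟩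

end DownwardInduction

section AssociatedPrimes

variable {R : Type u} [CommRing R] {E M : Type u} [AddCommGroup E] [Module R E]
  [AddCommGroup M] [Module R M]

theorem mem_associatedPrimes_iff [IsNoetherianRing R] {p : Ideal R} :
    p ∈ associatedPrimes R M ↔ p.IsPrime ∧ ∃ x : M, ∀ r, r ∈ p ↔ r • x = 0 := by
  refine isAssociatedPrime_iff.trans (and_congr_right fun _ => exists_congr fun x => ?_)
  exact SetLike.ext_iff.trans (forall_congr' fun _ => iff_congr Iff.rfl
    Submodule.mem_colon_singleton)

theorem mem_associatedPrimes_of_eq_zeroDivisors [IsNoetherianRing R] [Module.Finite R M]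
    {p : Ideal R} (hp : ∀ r, r ∈ p ↔ ∃ x : M, x ≠ 0 ∧ r • x = 0) : p ∈ associatedPrimes R M := by
  have union_eq : ⋃ q ∈ associatedPrimes R M, (q : Set R) = p :=
    (biUnion_associatedPrimes_eq_zero_divisors R M).trans (Set.ext fun r => (hp r).symm)
  obtain ⟨q, hq, p_le_q⟩ := (p.subset_union_prime_finite (associatedPrimes.finite R M) (f := id)
    0 0 fun q hq _ _ => hq.isPrime).1 union_eq.ge
  have q_le_p : q ≤ p := fun r hr => union_eq.le (Set.mem_biUnion hq hr)
  exact le_antisymm p_le_q q_le_p ▸ hq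

theorem eq_zero_of_pow_smul_eq_zero [IsNoetherianRing R] {p : Ideal R}
    (hp : Maximal (· ∈ associatedPrimes R M) p) {z : M} (hpz : ∀ a ∈ p, a • z = 0) {s : R}
    (hs : s ∉ p) {k : ℕ} (hz : s ^ k • z = 0) : z = 0 := by
  by_contra z_ne_zero
  obtain ⟨q, hq, torsion_le_q⟩ := exists_le_isAssociatedPrime_of_isNoetherianRing R z z_ne_zero
  have mem_q {a : R} (ha : a • z = 0) : a ∈ q :=
    torsion_le_q (Submodule.mem_colon_singleton.2 ha)
  have p_le_q : p ≤ q := fun a ha => mem_q (hpz a ha)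
  have s_mem_q : s ∈ q := hq.isPrime.mem_of_pow_mem k (mem_q hz)
  exact hs (hp.2 hq p_le_q s_mem_q)

theorem torsionBySet_ne_bot_of_mem_associatedPrimes [IsNoetherianRing R] {p : Ideal R}
    (hp : p ∈ associatedPrimes R M) : Submodule.torsionBySet R M p ≠ ⊥ := by
  obtain ⟨p_prime, x, hx⟩ := mem_associatedPrimes_iff.1 hp
  refine (Submodule.ne_bot_iff _).2 ⟨x, ?_, ?_⟩
  · exact (Submodule.mem_torsionBySet_iff _ _).2 fun a => (hx a).1 a.2
  · rintro rfl
    exact p_prime.one_notMem ((hx 1).2 (smul_zero 1))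

theorem associatedPrimes_subset_of_essential [IsNoetherianRing R] {f : M →ₗ[R] E}
    (hf : Function.Injective f)
    (hess : ∀ K : Submodule R E, K ≠ ⊥ → K ⊓ LinearMap.range f ≠ ⊥) :
    associatedPrimes R E ⊆ associatedPrimes R M := by
  intro p hp
  obtain ⟨p_prime, y, hy⟩ := mem_associatedPrimes_iff.1 hp
  have y_ne_zero : y ≠ 0 := by
    rintro rfl
    exact p_prime.one_notMem ((hy 1).2 (smul_zero 1))
  obtain ⟨z, ⟨hz, m, rfl⟩, z_ne_zero⟩ := (Submodule.ne_bot_iff _).1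
    (hess (R ∙ y) (Submodule.span_singleton_eq_bot.not.2 y_ne_zero))
  obtain ⟨s, hs⟩ := Submodule.mem_span_singleton.1 hz
  have s_notMem : s ∉ p := fun h => z_ne_zero (hs.symm.trans ((hy s).1 h))
  refine mem_associatedPrimes_iff.2 ⟨p_prime, m, fun r => ?_⟩
  rw [← map_eq_zero_iff f hf, map_smul, ← hs, smul_smul, ← hy,
    p_prime.mul_mem_iff_mem_or_mem, or_iff_left s_notMem]

theorem exists_localizedModule_ne_zero_of_mem_associatedPrimes [IsNoetherianRing R]
    {p : Ideal R} [p.IsPrime] (hp : p ∈ associatedPrimes R M) :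
    ∃ z : LocalizedModule p.primeCompl M, z ≠ 0 ∧ ∀ a ∈ p, a • z = 0 := by
  obtain ⟨-, m, hm⟩ := mem_associatedPrimes_iff.1 hp
  refine ⟨LocalizedModule.mkLinearMap p.primeCompl M m, fun h => ?_, fun a ha => ?_⟩
  · obtain ⟨s, hs⟩ := (IsLocalizedModule.eq_zero_iff p.primeCompl _).1 h
    exact s.2 ((hm s).2 hs)
  · rw [← map_smul, (hm a).1 ha, map_zero]

end AssociatedPrimes

section InjectiveFiltration

variable {R : Type u} [CommRing R] {E P : Type u} [AddCommGroup E] [Module R E]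
  [AddCommGroup P] [Module R P]

theorem torsionOf_le_torsionOf_smul {x y : E}
    (h : Ideal.torsionOf R E x ≤ Ideal.torsionOf R E y) (b : R) :
    Ideal.torsionOf R E (b • x) ≤ Ideal.torsionOf R E (b • y) := fun a ha => by
  rw [Ideal.mem_torsionOf_iff, smul_smul] at ha ⊢
  exact h ha

/-- `A` contains every element of `E` whose annihilator contains the annihilator of some element
of `A`. Submodules of an injective module with this property serve as the terms of the filtration
by residue spaces: the property survives unions of chains and passes to the preimage of the
`I`-torsion of `E ⧸ A`. -/
def IsAnnihilatorClosed (A : Submodule R E) : Prop :=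
  ∀ x ∈ A, ∀ y, Ideal.torsionOf R E x ≤ Ideal.torsionOf R E y → y ∈ A

theorem isAnnihilatorClosed_bot : IsAnnihilatorClosed (⊥ : Submodule R E) := by
  intro x hx y hxy
  obtain rfl := (Submodule.mem_bot R).1 hx
  exact (Submodule.mem_bot R).2 ((one_smul R y).symm.trans (hxy (smul_zero 1)))

theorem isAnnihilatorClosed_sSup {c : Set (Submodule R E)} (hne : c.Nonempty)
    (hc : IsChain (· ≤ ·) c) (h : ∀ A ∈ c, IsAnnihilatorClosed A) :
    IsAnnihilatorClosed (sSup c) := by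
  intro x hx y hxy
  rw [Submodule.mem_sSup_of_directed hne hc.directedOn] at hx ⊢
  obtain ⟨A, hA, hxA⟩ := hx
  exact ⟨A, hA, h A hA x hxA y hxy⟩

theorem mem_comap_mkQ_torsionBySet {A : Submodule R E} {I : Ideal R} {x : E} :
    x ∈ (Submodule.torsionBySet R (E ⧸ A) I).comap A.mkQ ↔ ∀ a ∈ I, a • x ∈ A := by
  simp only [Submodule.mem_comap, Submodule.mem_torsionBySet_iff, Subtype.forall,
    SetLike.mem_coe, Submodule.mkQ_apply, ← Submodule.Quotient.mk_smul,
    Submodule.Quotient.mk_eq_zero]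

theorem IsAnnihilatorClosed.comap_mkQ_torsionBySet {A : Submodule R E}
    (hA : IsAnnihilatorClosed A) (I : Ideal R) :
    IsAnnihilatorClosed ((Submodule.torsionBySet R (E ⧸ A) I).comap A.mkQ) := by
  intro x hx y hxy
  rw [mem_comap_mkQ_torsionBySet] at hx ⊢
  exact fun a ha => hA _ (hx a ha) _ (torsionOf_le_torsionOf_smul hxy a)

theorem exists_smul_eq_of_injective (hE : Module.Injective R E) {a : R} {w : E} {I : Ideal R}
    (h : ∀ r, r * a ∈ I → r • w = 0) : ∃ y : E, a • y = w ∧ I ≤ Ideal.torsionOf R E y := by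
  let K : Submodule R R := LinearMap.ker (I.mkQ ∘ₗ LinearMap.toSpanSingleton R R a)
  have mem_K (r : R) : r ∈ K ↔ r * a ∈ I := Submodule.Quotient.mk_eq_zero I
  let mulA : (R ⧸ K) →ₗ[R] R ⧸ I := K.liftQ (I.mkQ ∘ₗ LinearMap.toSpanSingleton R R a) le_rfl
  have mulA_injective : Function.Injective mulA :=
    LinearMap.ker_eq_bot.1 (Submodule.ker_liftQ_eq_bot' _ _ rfl)
  let toE : (R ⧸ K) →ₗ[R] E :=
    K.liftQ (LinearMap.toSpanSingleton R E w) fun r hr => h r ((mem_K r).1 hr)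
  obtain ⟨φ, hφ⟩ := hE.out mulA mulA_injective toE
  refine ⟨φ (I.mkQ 1), ?_, fun r hr => ?_⟩
  · calc a • φ (I.mkQ 1) = φ (mulA (K.mkQ 1)) := by
          rw [← map_smul, ← map_smul, smul_eq_mul, mul_one, Submodule.mkQ_apply K,
            Submodule.liftQ_apply, LinearMap.comp_apply, LinearMap.toSpanSingleton_apply, one_smul]
      _ = toE (K.mkQ 1) := hφ _
      _ = w := one_smul R w
  · have mkQ_r : I.mkQ r = 0 := (Submodule.Quotient.mk_eq_zero I).2 hr
    rw [Ideal.mem_torsionOf_iff, ← map_smul, ← map_smul, smul_eq_mul, mul_one, mkQ_r, map_zero]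

theorem exists_pow_succ_smul_eq [IsNoetherianRing R] (hE : Module.Injective R E) (s : R) (x : E) :
    ∃ (k : ℕ) (y : E), s ^ (k + 1) • y = s ^ k • x ∧
      Ideal.torsionOf R E x ≤ Ideal.torsionOf R E y := by
  have torsionOf_pow_mono : Monotone fun k : ℕ => Ideal.torsionOf R E (s ^ k • x) :=
    monotone_nat_of_le_succ fun k r hr => by
      rw [Ideal.mem_torsionOf_iff] at hr ⊢
      rw [pow_succ', mul_smul, smul_comm, hr, smul_zero]
  obtain ⟨k, hk⟩ := monotone_stabilizes_iff_noetherian.2 ‹IsNoetherianRing R›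
    ⟨_, torsionOf_pow_mono⟩
  have torsionOf_stable : Ideal.torsionOf R E (s ^ k • x) = Ideal.torsionOf R E (s ^ (k + 1) • x) :=
    hk (k + 1) k.le_succ
  obtain ⟨y, hy⟩ := exists_smul_eq_of_injective hE (a := s ^ (k + 1)) (w := s ^ k • x)
    (I := Ideal.torsionOf R E x) fun r hr => by
      rw [Ideal.mem_torsionOf_iff, mul_smul] at hr
      exact torsionOf_stable.ge hr
  exact ⟨k, y, hy⟩

theorem IsAnnihilatorClosed.isResidueSpace_torsionBySet [IsNoetherianRing R]
    (hE : Module.Injective R E) {A : Submodule R E} (hA : IsAnnihilatorClosed A) {p : Ideal R}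
    (hp : Maximal (· ∈ associatedPrimes R (E ⧸ A)) p) :
    IsResidueSpace p (Submodule.torsionBySet R (E ⧸ A) p) := by
  have smul_eq_zero (a) (ha : a ∈ p) (v : Submodule.torsionBySet R (E ⧸ A) p) : a • v = 0 :=
    Subtype.ext ((Submodule.mem_torsionBySet_iff _ _).1 v.2 ⟨a, ha⟩)
  have eq_zero {s : R} (hs : s ∉ p) (k : ℕ) (v : Submodule.torsionBySet R (E ⧸ A) p)
      (hv : s ^ k • v = 0) : v = 0 :=
    Subtype.ext (eq_zero_of_pow_smul_eq_zero hp
      (fun a ha => congrArg Subtype.val (smul_eq_zero a ha v)) hs (congrArg Subtype.val hv))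
  refine ⟨fun s hs => ⟨(injective_iff_map_eq_zero (DistribSMul.toAddMonoidHom _ s)).2
    fun v hv => eq_zero hs 1 v (by rwa [pow_one]), ?_⟩, smul_eq_zero⟩
  rintro ⟨v, hv⟩
  obtain ⟨x, rfl⟩ := A.mkQ_surjective v
  obtain ⟨k, y, hyx, torsion_le⟩ := exists_pow_succ_smul_eq hE s x
  let y' : Submodule.torsionBySet R (E ⧸ A) p :=
    ⟨A.mkQ y, hA.comap_mkQ_torsionBySet p x hv y torsion_le⟩
  refine ⟨y', sub_eq_zero.1 (eq_zero hs k _ ?_)⟩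
  rw [smul_sub, smul_smul, ← pow_succ, sub_eq_zero]
  exact Subtype.ext (congrArg A.mkQ hyx)

theorem IsAnnihilatorClosed.associatedPrimes_quotient_subset [IsNoetherianRing R]
    {A : Submodule R E} (hA : IsAnnihilatorClosed A) :
    associatedPrimes R (E ⧸ A) ⊆ associatedPrimes R E := by
  intro p hp
  obtain ⟨p_prime, x, hx⟩ := mem_associatedPrimes_iff.1 hp
  obtain ⟨y, y_spec, y_max⟩ : ∃ y, MaximalFor (fun y : E => ∀ r, r ∈ p ↔ r • y ∈ A)
      (Ideal.torsionOf R E) y := by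
    refine exists_maximalFor_of_wellFoundedGT _ _ ?_
    obtain ⟨y, rfl⟩ := A.mkQ_surjective x
    exact ⟨y, fun r => (hx r).trans (Submodule.Quotient.mk_eq_zero A)⟩
  refine associatedPrimes.subset_of_injective (R ∙ y).subtype_injective
    (mem_associatedPrimes_of_eq_zeroDivisors fun r => ⟨fun hr => ?_, ?_⟩)
  · have not_le : ¬ Ideal.torsionOf R E (r • y) ≤ Ideal.torsionOf R E y := fun hle =>
      p.one_notMem ((y_spec 1).2 ((one_smul R y).symm ▸ hA _ ((y_spec r).1 hr) y hle))
    obtain ⟨s, hsry, hsy⟩ := SetLike.not_le_iff_exists.1 not_le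
    refine ⟨⟨s • y, Submodule.smul_mem _ s (Submodule.mem_span_singleton_self y)⟩,
      fun h => hsy (congrArg Subtype.val h), Subtype.ext ?_⟩
    exact (smul_comm r s y).trans hsry
  · rintro ⟨⟨_, hz⟩, z_ne_zero, hrz⟩
    obtain ⟨s, rfl⟩ := Submodule.mem_span_singleton.1 hz
    by_contra hr
    have smul_spec (t : R) : t ∈ p ↔ t • r • y ∈ A := by
      rw [smul_smul, ← y_spec, p_prime.mul_mem_iff_mem_or_mem, or_iff_left hr]
    have torsion_le : Ideal.torsionOf R E y ≤ Ideal.torsionOf R E (r • y) := fun t ht => by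
      rw [Ideal.mem_torsionOf_iff] at ht ⊢
      rw [smul_comm, ht, smul_zero]
    exact z_ne_zero (Subtype.ext (y_max smul_spec torsion_le
      ((smul_comm s r y).trans (congrArg Subtype.val hrz))))

theorem ExtVanishes.of_injective_of_isResidueSpace [IsNoetherianRing R]
    (hE : Module.Injective R E)
    (h : ∀ p ∈ associatedPrimes R E, ∀ (V : Type u) [AddCommGroup V] [Module R V],
      IsResidueSpace p V → ExtVanishes R V P 1) : ExtVanishes R E P 1 := by
  refine ExtVanishes.one_of_transfinite_extension IsAnnihilatorClosed isAnnihilatorClosed_bot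
    (fun c => isAnnihilatorClosed_sSup) fun A hA A_ne_top => ?_
  have := Submodule.Quotient.nontrivial_iff.2 A_ne_top
  obtain ⟨p, hp⟩ := exists_maximal_of_wellFoundedGT (· ∈ associatedPrimes R (E ⧸ A))
    (associatedPrimes.nonempty R (E ⧸ A))
  exact ⟨Submodule.torsionBySet R (E ⧸ A) p, torsionBySet_ne_bot_of_mem_associatedPrimes hp.1,
    hA.comap_mkQ_torsionBySet p, h p (hA.associatedPrimes_quotient_subset hp.1) _
      (hA.isResidueSpace_torsionBySet hE hp)⟩

end InjectiveFiltration

section CotorsionPairs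

theorem mem_leftPerp1_iff {R : Type} [Ring R] {𝒳 : Set (ModuleCat.{0} R)} {M : ModuleCat.{0} R} :
    M ∈ leftPerp1 R 𝒳 ↔ ∀ X ∈ 𝒳, ExtVanishes R M X 1 :=
  forall₂_congr fun X _ => extV_succ_iff R M X 0

theorem subset_rightPerp1_leftPerp1 {R : Type} [Ring R] (𝒳 : Set (ModuleCat.{0} R)) :
    𝒳 ⊆ rightPerp1 R (leftPerp1 R 𝒳) :=
  fun X hX _ hM => hM X hX

theorem localizedModule_mem_leftPerp1 {R : Type} [CommRing R] {𝒳 : Set (ModuleCat.{0} R)}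
    (h𝒳 : ∀ X ∈ 𝒳, PureInjective R X) {M : ModuleCat.{0} R} (hM : M ∈ leftPerp1 R 𝒳)
    (S : Submonoid R) : ModuleCat.of R (LocalizedModule S M) ∈ leftPerp1 R 𝒳 :=
  mem_leftPerp1_iff.2 fun X hX => (mem_leftPerp1_iff.1 hM X hX).localizedModule (h𝒳 X hX) S

end CotorsionPairs

/-- if `(𝒞, 𝒲)` is a hereditary cotorsion pair over a commutative noetherian
ring cogenerated by a class of pure-injective modules of finite injective dimension, then
`𝒞` is closed under injective envelopes. -/
theorem stmt10 (R : Type) [CommRing R] [IsNoetherianRing R]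
    (𝒞 𝒲 Pcl : Set (ModuleCat.{0} R))
    (hpair : IsHereditaryCotorsionPair R 𝒞 𝒲)
    (hP : Pcl ⊆ PIFinInj R)
    (hcogen : 𝒞 = leftPerp1 R Pcl) :
    ∀ M ∈ 𝒞, ∀ (E : Type) (_ : AddCommGroup E) (_ : Module R E) (f : ↥M →ₗ[R] E),
      IsInjectiveEnvelope R f → ModuleCat.of R E ∈ 𝒞 := by
  intro M hM E _ _ f ⟨hE, f_injective, f_essential⟩
  obtain ⟨⟨-, rfl⟩, hereditary⟩ := hpair
  subst hcogen
  refine mem_leftPerp1_iff.2 fun Q hQ => ?_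
  obtain ⟨-, d, injDim_le⟩ := hP hQ
  refine ExtVanishes.of_injective_of_isResidueSpace hE fun p hp V _ _ hV => ?_
  have p_prime : p.IsPrime := hp.isPrime
  obtain ⟨z, z_ne_zero, hpz⟩ := exists_localizedModule_ne_zero_of_mem_associatedPrimes
    (associatedPrimes_subset_of_essential f_injective f_essential hp)
  have localization_mem : ModuleCat.of R (LocalizedModule p.primeCompl M) ∈ leftPerp1 R Pcl :=
    localizedModule_mem_leftPerp1 (fun X hX => (hP hX).1) hM p.primeCompl
  have ext_localization (n : ℕ) : ExtVanishes R (LocalizedModule p.primeCompl M) Q (n + 1) :=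
    (extV_succ_iff R _ Q n).1
      (hereditary _ localization_mem Q (subset_rightPerp1_leftPerp1 Pcl hQ) (n + 1) n.succ_pos)
  exact hV.extVanishes_one (isLocalAt_localizedModule p M) z_ne_zero hpz ext_localization d
    fun X _ _ n hn => (extV_succ_iff R _ Q n).1 (injDim_le (ModuleCat.of R X) (n + 1) (by omega))
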